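/- Let 2 ≤ d ≤ D with D ≥ 3, and let C ⊆ ℝ^D be a d-dimensional convex cone containing a d-dimensional spherical cone P^d[c, ψ] for some unit vector c and ψ ∈ (0, π/2). Let ε ∈ (0,1), set θ := arcsin ε, and assume 2θ ≤ ψ. Then the spherical measure of the ε-approximate cone satisfies μ(C^ε) ≥ (Γ(D/2)/(√π · Γ((D−1)/2))) · (∫₀^ψ sin^{d−2}x dx / ∫₀^{2θ} sin^{d−2}x dx) · ∫₀^θ sin^{D−2}x dx, where Γ is the Gamma function. -/

import Mathlib

open RealInnerProductSpace MeasureTheory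

noncomputable section

/-- The `ε`-approximate cone of a convex cone `C`:
`C^ε = {w : w = u + v, u ∈ C, v ∈ span(C)^⊥, ‖v‖ ≤ ε‖w‖}`. -/
def approxCone {E : Type*} [NormedAddCommGroup E] [InnerProductSpace ℝ E]
    (C : ConvexCone ℝ E) (ε : ℝ) : Set E :=
  {w | ∃ u ∈ C, ∃ v ∈ (Submodule.span ℝ (C : Set E))ᗮ, w = u + v ∧ ‖v‖ ≤ ε * ‖w‖}

/-- The spherical cone `P^d[c,θ] = {u ∈ U : ⟨c,u⟩ ≥ ‖u‖ cos θ}` with underlying subspace `U`. -/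
def sphericalCone {E : Type*} [NormedAddCommGroup E] [InnerProductSpace ℝ E]
    (U : Submodule ℝ E) (c : E) (θ : ℝ) : Set E :=
  {u | u ∈ U ∧ ‖u‖ * Real.cos θ ≤ ⟪c, u⟫}

/-- The normalized spherical measure `σ_{D−1}` on the unit sphere `S^{D−1} ⊆ ℝ^D`
(normalized so that `σ_{D−1}(S^{D−1}) = 1`). -/
def sphericalMeasure (D : ℕ) :
    Measure (Metric.sphere (0 : EuclideanSpace ℝ (Fin D)) 1) :=
  ((volume : Measure (EuclideanSpace ℝ (Fin D))).toSphere Set.univ)⁻¹ •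
    (volume : Measure (EuclideanSpace ℝ (Fin D))).toSphere

/-- `μ(A) := σ_{D−1}(A ∩ S^{D−1})`, as a real number. -/
def sphMu (D : ℕ) (A : Set (EuclideanSpace ℝ (Fin D))) : ℝ :=
  (sphericalMeasure D ((↑) ⁻¹' A)).toReal

/-!
Let `U` be the span of `C` and write `ℝ^D = U × Uᗮ`. By Tonelli and spherical coordinates in `U`,
thickening a cone `S ⊆ U` by `ε` in the directions of `Uᗮ` multiplies the volume of its part in the
unit ball by a constant which depends on `U` and `ε` but not on `S`. Hence enlarging `S` from the
spherical cone of angle `θ = arcsin ε` to the one of angle `ψ` multiplies the measure of the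
thickening by exactly `∫₀^ψ sin^{d-2} / ∫₀^θ sin^{d-2}`. The thickening for the angle `ψ` lies in
the approximate cone `C^ε`, while the one for the angle `θ` contains the full-dimensional cap of
angle `θ` about `c`, whose measure is explicit. This exact proportionality takes the place of a
packing by caps, and yields `θ` instead of `2θ` in the denominator.
-/

open Real Set Metric Module
open scoped Pointwise

section Cone

variable {F : Type*} [NormedAddCommGroup F] [NormedSpace ℝ F]

/-- A set stable under multiplication by positive scalars; unlike a `ConvexCone`, it need not be
convex. -/
def IsCone (S : Set F) : Prop :=
  ∀ ⦃r : ℝ⦄, 0 < r → ∀ ⦃x⦄, x ∈ S → r • x ∈ S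

theorem isCone_univ : IsCone (univ : Set F) :=
  fun _ _ _ _ => mem_univ _

theorem IsCone.smul_mem_iff {S : Set F} (hS : IsCone S) {r : ℝ} (hr : 0 < r) {x : F} :
    r • x ∈ S ↔ x ∈ S :=
  ⟨fun h => by simpa [smul_smul, hr.ne'] using hS (inv_pos.2 hr) h, fun h => hS hr h⟩

theorem IsCone.Ioo_smul_image_sphere {S : Set F} (hS : IsCone S) :
    Ioo (0 : ℝ) 1 • ((↑) '' ((↑) ⁻¹' S : Set (sphere (0 : F) 1))) =
      (S ∩ ball 0 1) \ {0} := by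
  ext x
  constructor
  · rintro ⟨r, ⟨hr0, hr1⟩, -, ⟨⟨u, hu⟩, huS, rfl⟩, rfl⟩
    have hu1 : ‖u‖ = 1 := by simpa using hu
    have hu0 : u ≠ 0 := norm_pos_iff.1 (hu1 ▸ one_pos)
    exact ⟨⟨hS hr0 huS, by simpa [norm_smul, abs_of_pos hr0, hu1] using hr1⟩,
      smul_ne_zero hr0.ne' hu0⟩
  · rintro ⟨⟨hxS, hx1⟩, hx0⟩
    have hx : 0 < ‖x‖ := norm_pos_iff.2 hx0
    refine ⟨‖x‖, ⟨hx, by simpa using hx1⟩, ‖x‖⁻¹ • x, ⟨⟨‖x‖⁻¹ • x, ?_⟩, ?_, rfl⟩, ?_⟩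
    · simp [norm_smul, hx.ne']
    · exact hS (inv_pos.2 hx) hxS
    · simp [smul_smul, hx.ne']

variable [FiniteDimensional ℝ F] [MeasurableSpace F] [BorelSpace F]

theorem IsCone.toSphere_preimage_coe {S : Set F} (hS : IsCone S) (hSm : MeasurableSet S)
    (μ : Measure F) [μ.IsAddHaarMeasure] :
    μ.toSphere ((↑) ⁻¹' S) = finrank ℝ F * μ (S ∩ ball 0 1) := by
  rw [μ.toSphere_apply' (measurable_subtype_coe hSm), hS.Ioo_smul_image_sphere]
  nontriviality F
  rw [measure_sdiff_null (measure_singleton _)]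

/-- The measure `r ^ n dr` on `(0, ∞)`, regarded as a measure on `ℝ`. For `n = dim F - 1` it is
the radial factor of Lebesgue measure on `F` in spherical coordinates. -/
def radialMeasure (n : ℕ) : Measure ℝ :=
  (volume.restrict (Ioi 0)).withDensity fun r => ENNReal.ofReal (r ^ n)

instance (n : ℕ) : SFinite (radialMeasure n) :=
  inferInstanceAs (SFinite (Measure.withDensity _ _))

theorem map_coe_volumeIoiPow (n : ℕ) :
    (Measure.volumeIoiPow n).map (↑) = radialMeasure n := by
  ext s hs
  rw [Measure.map_apply measurable_subtype_coe hs, Measure.volumeIoiPow, radialMeasure,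
    withDensity_apply _ (measurable_subtype_coe hs), withDensity_apply _ hs,
    setLIntegral_subtype measurableSet_Ioi _ fun r => ENNReal.ofReal (r ^ n),
    Subtype.image_preimage_coe, Measure.restrict_restrict hs, inter_comm]

theorem IsCone.map_norm_restrict [Nontrivial F] {S : Set F} (hS : IsCone S)
    (hSm : MeasurableSet S) (μ : Measure F) [μ.IsAddHaarMeasure] :
    (μ.restrict S).map (‖·‖) =
      (finrank ℝ F * μ (S ∩ ball 0 1)) • radialMeasure (finrank ℝ F - 1) := by
  ext t ht
  have hpolar : ((↑) ⁻¹' (norm ⁻¹' t ∩ S) : Set ({0}ᶜ : Set F)) =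
      homeomorphUnitSphereProd F ⁻¹' (((↑) ⁻¹' S) ×ˢ ((↑) ⁻¹' t)) := by
    ext ⟨x, hx⟩
    have hxS := hS.smul_mem_iff (inv_pos.2 (norm_pos_iff.2 hx)) (x := x)
    simp [hxS, and_comm]
  calc (μ.restrict S).map (‖·‖) t = μ (norm ⁻¹' t ∩ S) := by
        rw [Measure.map_apply measurable_norm ht, Measure.restrict_apply (measurable_norm ht)]
    _ = μ.comap (↑) ((↑) ⁻¹' (norm ⁻¹' t ∩ S) : Set ({0}ᶜ : Set F)) := by
        rw [comap_subtype_coe_apply (measurableSet_singleton _).compl,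
          Subtype.image_preimage_coe, ← inter_comm _ {0}ᶜ, ← sdiff_eq,
          measure_sdiff_null (measure_singleton _)]
    _ = μ.toSphere ((↑) ⁻¹' S) * (Measure.volumeIoiPow (finrank ℝ F - 1)) ((↑) ⁻¹' t) := by
        rw [hpolar, μ.measurePreserving_homeomorphUnitSphereProd.measure_preimage_emb
          (Homeomorph.measurableEmbedding _), Measure.prod_prod]
    _ = _ := by
        rw [hS.toSphere_preimage_coe hSm, Measure.smul_apply, ← map_coe_volumeIoiPow,
          Measure.map_apply measurable_subtype_coe ht, smul_eq_mul]

end Cone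

section PlanarSector

theorem lintegral_Ioc_ofReal {f : ℝ → ℝ} {a b : ℝ} (hab : a ≤ b) (hf : ContinuousOn f (Icc a b))
    (hf0 : ∀ x ∈ Ioc a b, 0 ≤ f x) :
    ∫⁻ x in Ioc a b, ENNReal.ofReal (f x) = ENNReal.ofReal (∫ x in a..b, f x) := by
  rw [intervalIntegral.integral_of_le hab, ofReal_integral_eq_lintegral_ofReal
    (hf.integrableOn_Icc.mono_set Ioc_subset_Icc_self)
    ((ae_restrict_mem measurableSet_Ioc).mono hf0)]

theorem lintegral_Ioo_ofReal_pow (m : ℕ) :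
    ∫⁻ r in Ioo (0 : ℝ) 1, ENNReal.ofReal (r ^ m) = ENNReal.ofReal (1 / (m + 1)) := by
  rw [restrict_Ioo_eq_restrict_Ioc, lintegral_Ioc_ofReal zero_le_one (by fun_prop)
    fun r hr => pow_nonneg hr.1.le _, integral_pow]
  simp

theorem lintegral_Ioc_ofReal_sin_pow (m : ℕ) {α : ℝ} (hα : α ∈ Icc 0 π) :
    ∫⁻ x in Ioc 0 α, ENNReal.ofReal (sin x ^ m) =
      ENNReal.ofReal (∫ x in (0 : ℝ)..α, sin x ^ m) :=
  lintegral_Ioc_ofReal hα.1 (by fun_prop)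
    fun x hx => pow_nonneg (sin_nonneg_of_nonneg_of_le_pi hx.1.le (hx.2.trans hα.2)) _

/-- The points of the open unit disc whose angle with the positive first axis is at most `α`: this
is the cap `sphericalCone ⊤ c α ∩ ball 0 1` in the coordinates
`(component along c, distance to the axis ℝ c)`. -/
def planarSector (α : ℝ) : Set (ℝ × ℝ) :=
  {p | √(p.1 ^ 2 + p.2 ^ 2) * cos α ≤ p.1} ∩ {p | √(p.1 ^ 2 + p.2 ^ 2) < 1}

theorem measurableSet_planarSector (α : ℝ) : MeasurableSet (planarSector α) :=
  (measurableSet_le (by fun_prop) (by fun_prop)).inter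
    (measurableSet_lt (by fun_prop) (by fun_prop))

theorem polarCoord_symm_mem_planarSector_iff {α : ℝ} (hα : α ∈ Icc 0 π) {p : ℝ × ℝ}
    (hp : p ∈ polarCoord.target) :
    polarCoord.symm p ∈ planarSector α ∩ univ ×ˢ Ioi 0 ↔ p ∈ Ioo (0 : ℝ) 1 ×ˢ Ioc 0 α := by
  obtain ⟨r, x⟩ := p
  obtain ⟨hr : 0 < r, hx⟩ := hp
  have hnorm : √((r * cos x) ^ 2 + (r * sin x) ^ 2) = r := by
    rw [mul_pow, mul_pow, ← mul_add, cos_sq_add_sin_sq, mul_one, sqrt_sq hr.le]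
  have hsin : 0 < sin x ↔ 0 < x :=
    ⟨fun h => not_le.1 fun h0 => h.not_ge (sin_nonpos_of_nonpos_of_neg_pi_le h0 hx.1.le),
      fun h => sin_pos_of_pos_of_lt_pi h hx.2⟩
  have hcos : 0 < x → (cos α ≤ cos x ↔ x ≤ α) := fun h =>
    strictAntiOn_cos.le_iff_ge hα ⟨h.le, hx.2.le⟩
  simp only [polarCoord_symm_apply, planarSector, mem_inter_iff, mem_ofPred_eq, hnorm, mem_prod,
    mem_univ, mem_Ioi, mul_pos_iff_of_pos_left hr, hsin, mul_le_mul_iff_right₀ hr, mem_Ioo, mem_Ioc,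
    hr, true_and]
  grind

theorem lintegral_planarSector_ofReal_snd_pow (m : ℕ) {α : ℝ} (hα : α ∈ Icc 0 π) :
    ∫⁻ p in planarSector α ∩ univ ×ˢ Ioi 0, ENNReal.ofReal (p.2 ^ m) =
      ENNReal.ofReal (1 / (m + 2) * ∫ x in (0 : ℝ)..α, sin x ^ m) := by
  have htarget : volume.restrict polarCoord.target = volume.restrict (Ioi 0 ×ˢ Ioc (-π) π) := by
    rw [polarCoord_target, Measure.volume_eq_prod, ← Measure.prod_restrict,
      restrict_Ioo_eq_restrict_Ioc, Measure.prod_restrict]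
  have hpolar : ∀ p ∈ polarCoord.target,
      ENNReal.ofReal p.1 • (planarSector α ∩ univ ×ˢ Ioi 0).indicator
          (fun q => ENNReal.ofReal (q.2 ^ m)) (polarCoord.symm p) =
        (Ioo (0 : ℝ) 1 ×ˢ Ioc 0 α).indicator
          (fun q => ENNReal.ofReal (q.1 ^ (m + 1)) * ENNReal.ofReal (sin q.2 ^ m)) p := by
    intro p hp
    have hp0 : 0 < p.1 := hp.1
    simp only [indicator, polarCoord_symm_mem_planarSector_iff hα hp]
    split_ifs
    · rw [polarCoord_symm_apply, smul_eq_mul, ← ENNReal.ofReal_mul hp0.le,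
        ← ENNReal.ofReal_mul (by positivity), mul_pow, pow_succ', mul_assoc]
    · exact smul_zero _
  rw [← lintegral_indicator
      ((measurableSet_planarSector α).inter (.prod .univ measurableSet_Ioi)),
    ← lintegral_comp_polarCoord_symm,
    setLIntegral_congr_fun polarCoord.open_target.measurableSet hpolar, htarget,
    setLIntegral_indicator (measurableSet_Ioo.prod measurableSet_Ioc),
    inter_eq_left.2 (prod_mono Ioo_subset_Ioi_self (Ioc_subset_Ioc (by linarith [pi_pos]) hα.2)),
    Measure.volume_eq_prod, ← Measure.prod_restrict,
    lintegral_prod_mul (f := fun r => ENNReal.ofReal (r ^ (m + 1)))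
      (g := fun x => ENNReal.ofReal (sin x ^ m)) (by fun_prop) (by fun_prop),
    lintegral_Ioo_ofReal_pow, lintegral_Ioc_ofReal_sin_pow m hα, ENNReal.ofReal_mul (by positivity),
    Nat.cast_succ, add_assoc, one_add_one_eq_two]

theorem prod_radialMeasure_planarSector (m : ℕ) {α : ℝ} (hα : α ∈ Icc 0 π) :
    (volume.prod (radialMeasure m)) (planarSector α) =
      ENNReal.ofReal (1 / (m + 2) * ∫ x in (0 : ℝ)..α, sin x ^ m) := by
  have hrestrict : (volume : Measure ℝ).prod (volume.restrict (Ioi 0)) =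
      volume.restrict (univ ×ˢ Ioi 0 : Set (ℝ × ℝ)) := by
    rw [Measure.volume_eq_prod, ← Measure.prod_restrict, Measure.restrict_univ]
  rw [radialMeasure, prod_withDensity_right (by fun_prop),
    withDensity_apply _ (measurableSet_planarSector α), hrestrict,
    Measure.restrict_restrict (measurableSet_planarSector α),
    lintegral_planarSector_ofReal_snd_pow m hα]

end PlanarSector

section Orthogonal

variable {F : Type*} [NormedAddCommGroup F] [InnerProductSpace ℝ F]

theorem norm_add_orthogonal {U : Submodule ℝ F} (u : U) (v : Uᗮ) :
    ‖(u + v : F)‖ = √(‖u‖ ^ 2 + ‖v‖ ^ 2) := by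
  rw [norm_add_eq_sqrt_iff_real_inner_eq_zero.2 (U.inner_right_of_mem_orthogonal u.2 v.2)]
  simp only [pow_two, Submodule.coe_norm]

variable [FiniteDimensional ℝ F] [MeasurableSpace F] [BorelSpace F]

theorem volume_eq_volume_prod_orthogonal (U : Submodule ℝ F) (A : Set F) :
    volume A = volume {p : U × Uᗮ | (p.1 + p.2 : F) ∈ A} :=
  ((U.orthogonalDecomposition.symm.measurePreserving.comp
    (WithLp.volume_preserving_toLp U Uᗮ)).measure_preimage_emb
    ((U.orthogonalDecomposition.symm.toHomeomorph.measurableEmbedding).comp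
      (MeasurableEquiv.toLp 2 (U × Uᗮ)).measurableEmbedding) A).symm

end Orthogonal

section ConicThickening

variable {F : Type*} [NormedAddCommGroup F] [InnerProductSpace ℝ F] [FiniteDimensional ℝ F]

/-- The points of `F` whose orthogonal projection to `U` lies in `S` and whose component orthogonal
to `U` has norm at most `ε` times the norm of the point. For a cone `S` spanning `U` this is the
`ε`-approximate cone of `S`. -/
def conicThickening (U : Submodule ℝ F) (S : Set U) (ε : ℝ) : Set F :=
  U.orthogonalProjectionOnto ⁻¹' S ∩ {w | ‖Uᗮ.orthogonalProjectionOnto w‖ ≤ ε * ‖w‖}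

variable {U : Submodule ℝ F} {S : Set U}

theorem add_mem_conicThickening_iff {ε : ℝ} {u : U} {v : Uᗮ} :
    (u + v : F) ∈ conicThickening U S ε ↔ u ∈ S ∧ ‖v‖ ≤ ε * √(‖u‖ ^ 2 + ‖v‖ ^ 2) := by
  have hu : U.orthogonalProjectionOnto (u + v : F) = u := by simp
  have hv : Uᗮ.orthogonalProjectionOnto (u + v : F) = v := by simp
  simp only [conicThickening, mem_inter_iff, mem_preimage, mem_ofPred_eq, hu, hv,
    norm_add_orthogonal]

theorem IsCone.conicThickening (hS : IsCone S) (ε : ℝ) : IsCone (conicThickening U S ε) := by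
  rintro r hr w ⟨hwS, hw⟩
  refine ⟨by simpa only [mem_preimage, map_smul] using hS hr hwS, ?_⟩
  simpa only [mem_ofPred_eq, map_smul, norm_smul, mul_left_comm ε] using
    mul_le_mul_of_nonneg_left hw (norm_nonneg r)

theorem measurableSet_conicThickening [MeasurableSpace F] [BorelSpace F] (hS : MeasurableSet S)
    (ε : ℝ) : MeasurableSet (conicThickening U S ε) :=
  (U.orthogonalProjectionOnto.continuous.measurable hS).inter
    (measurableSet_le (by fun_prop) (by fun_prop))

theorem conicThickening_subset_approxCone {C : ConvexCone ℝ F}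
    (hU : U = Submodule.span ℝ (C : Set F)) (hSC : ∀ u ∈ S, (u : F) ∈ C) (ε : ℝ) :
    conicThickening U S ε ⊆ approxCone C ε := by
  rintro w ⟨hwS, hw⟩
  exact ⟨U.orthogonalProjectionOnto w, hSC _ hwS, Uᗮ.orthogonalProjectionOnto w,
    hU ▸ Subtype.coe_prop _, by simp, hw⟩

theorem volume_conicThickening_inter_ball [MeasurableSpace F] [BorelSpace F] [Nontrivial U]
    (hS : IsCone S) (hSm : MeasurableSet S) (ε : ℝ) :
    volume (conicThickening U S ε ∩ ball 0 1) =
      finrank ℝ U * volume (S ∩ ball 0 1) *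
        ((radialMeasure (finrank ℝ U - 1)).prod (volume : Measure Uᗮ))
          ({p | ‖p.2‖ ≤ ε * √(p.1 ^ 2 + ‖p.2‖ ^ 2)} ∩ {p | √(p.1 ^ 2 + ‖p.2‖ ^ 2) < 1}) := by
  set T : Set (ℝ × Uᗮ) :=
    {p | ‖p.2‖ ≤ ε * √(p.1 ^ 2 + ‖p.2‖ ^ 2)} ∩ {p | √(p.1 ^ 2 + ‖p.2‖ ^ 2) < 1} with hT
  have hTm : MeasurableSet T :=
    (measurableSet_le (by fun_prop) (by fun_prop)).inter
      (measurableSet_lt (by fun_prop) (by fun_prop))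
  have hmem : {p : U × Uᗮ | (p.1 + p.2 : F) ∈ conicThickening U S ε ∩ ball 0 1} =
      Prod.map norm id ⁻¹' T ∩ S ×ˢ univ := by
    ext ⟨u, v⟩
    simp only [mem_ofPred_eq, mem_inter_iff, mem_preimage, mem_ball_zero_iff, hT, Prod.map, id,
      add_mem_conicThickening_iff, norm_add_orthogonal, mem_prod, mem_univ, and_true]
    tauto
  calc volume (conicThickening U S ε ∩ ball 0 1)
      = (volume.prod volume) (Prod.map norm id ⁻¹' T ∩ S ×ˢ (univ : Set Uᗮ)) := by
        rw [volume_eq_volume_prod_orthogonal U, hmem, Measure.volume_eq_prod]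
    _ = (((volume.restrict S).map norm).prod (volume : Measure Uᗮ)) T := by
        rw [← Measure.restrict_apply ((measurable_norm.prodMap measurable_id) hTm),
          ← Measure.prod_restrict, Measure.restrict_univ,
          ← Measure.map_apply (measurable_norm.prodMap measurable_id) hTm,
          ← Measure.map_prod_map _ _ measurable_norm measurable_id, Measure.map_id]
    _ = _ := by
        rw [hS.map_norm_restrict hSm, Measure.prod_smul_left, Measure.smul_apply, smul_eq_mul]

end ConicThickening

section SphericalCone

variable {F : Type*} [NormedAddCommGroup F] [InnerProductSpace ℝ F]

theorem mem_sphericalCone_top_iff {c u : F} {α : ℝ} :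
    u ∈ sphericalCone ⊤ c α ↔ ‖u‖ * cos α ≤ ⟪c, u⟫ := by
  simp [sphericalCone]

theorem isCone_sphericalCone (U : Submodule ℝ F) (c : F) (α : ℝ) :
    IsCone (sphericalCone U c α) := by
  rintro r hr u ⟨huU, hu⟩
  refine ⟨U.smul_mem r huU, ?_⟩
  rw [norm_smul, norm_of_nonneg hr.le, real_inner_smul_right, mul_assoc]
  exact mul_le_mul_of_nonneg_left hu hr.le

theorem isClosed_sphericalCone (U : Submodule ℝ F) [FiniteDimensional ℝ U] (c : F) (α : ℝ) :
    IsClosed (sphericalCone U c α) := by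
  have hinter : sphericalCone U c α = (U : Set F) ∩ {u | ‖u‖ * cos α ≤ ⟪c, u⟫} := rfl
  rw [hinter]
  exact U.closed_of_finiteDimensional.inter (isClosed_le (by fun_prop) (by fun_prop))

theorem le_span_of_sphericalCone_subset {U : Submodule ℝ F} {c : F} (hcU : c ∈ U) (hc : ‖c‖ = 1)
    {ψ : ℝ} (hψ : ψ ∈ Ioc 0 π) {S : Set F} (hS : sphericalCone U c ψ ⊆ S) :
    U ≤ Submodule.span ℝ S := by
  have hopen : IsOpen {u : U | ‖u‖ * cos ψ < ⟪c, u⟫} := isOpen_lt (by fun_prop) (by fun_prop)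
  have hmem : (⟨c, hcU⟩ : U) ∈ {u : U | ‖u‖ * cos ψ < ⟪c, u⟫} := by
    have hcos : cos ψ < 1 := cos_zero ▸ strictAntiOn_cos ⟨le_rfl, pi_pos.le⟩ ⟨hψ.1.le, hψ.2⟩ hψ.1
    simpa [hc] using hcos
  rw [← Submodule.comap_subtype_eq_top]
  refine Submodule.eq_top_of_nonempty_interior' _ ⟨⟨c, hcU⟩, ?_⟩
  exact mem_interior.2 ⟨_, fun u hu => Submodule.subset_span (hS ⟨u.2, hu.le⟩), hopen, hmem⟩

variable [FiniteDimensional ℝ F]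

theorem sphericalCone_top_subset_conicThickening {U : Submodule ℝ F} {c : U} (hc : ‖c‖ = 1) {θ : ℝ}
    (hθ : θ ∈ Icc 0 (π / 2)) :
    sphericalCone ⊤ (c : F) θ ⊆ conicThickening U (sphericalCone ⊤ c θ) (sin θ) := by
  intro w hw
  set u := U.orthogonalProjectionOnto w
  have hcos : 0 ≤ cos θ := cos_nonneg_of_neg_pi_div_two_le_of_le (by linarith [hθ.1, pi_pos]) hθ.2
  have hsin : 0 ≤ sin θ := sin_nonneg_of_nonneg_of_le_pi hθ.1 (by linarith [hθ.2, pi_pos])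
  have hwu : ‖w‖ * cos θ ≤ ⟪c, u⟫ :=
    U.inner_orthogonalProjectionOnto_eq_of_mem_left c w ▸ mem_sphericalCone_top_iff.1 hw
  have huw : ‖u‖ ≤ ‖w‖ := U.norm_orthogonalProjectionOnto_apply_le w
  have hcu : ⟪c, u⟫ ≤ ‖u‖ := by simpa only [hc, one_mul] using real_inner_le_norm c u
  have hpyth : ‖w‖ ^ 2 = ‖u‖ ^ 2 + ‖Uᗮ.orthogonalProjectionOnto w‖ ^ 2 :=
    Submodule.norm_sq_eq_add_norm_sq_projection w U
  have hsq : (‖w‖ * cos θ) ^ 2 ≤ ‖u‖ ^ 2 := by gcongr; exact hwu.trans hcu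
  refine ⟨mem_sphericalCone_top_iff.2 <| (by gcongr : ‖u‖ * cos θ ≤ ‖w‖ * cos θ).trans hwu, ?_⟩
  refine (sq_le_sq₀ (norm_nonneg _) (by positivity)).1 ?_
  linear_combination hsq - hpyth - ‖w‖ ^ 2 * sin_sq_add_cos_sq θ

variable [MeasurableSpace F] [BorelSpace F]

theorem volume_sphericalCone_top_inter_ball {c : F} (hc : ‖c‖ = 1) (α : ℝ) :
    volume (sphericalCone ⊤ c α ∩ ball 0 1) =
      (volume.prod (volume.map fun v : (ℝ ∙ c)ᗮ => ‖v‖)) (planarSector α) := by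
  set e := LinearIsometryEquiv.toSpanUnitSingleton (𝕜 := ℝ) c hc
  have hmem : {p : (ℝ ∙ c) × (ℝ ∙ c)ᗮ | (p.1 + p.2 : F) ∈ sphericalCone ⊤ c α ∩ ball 0 1} =
      Prod.map e.symm norm ⁻¹' planarSector α := by
    ext ⟨u, v⟩
    obtain ⟨t, rfl⟩ := e.surjective u
    have hcv : ⟪c, (v : F)⟫ = 0 := Submodule.mem_orthogonal_singleton_iff_inner_right.1 v.2
    have hinner : ⟪c, (e t + v : F)⟫ = t := by
      simp [e, inner_add_right, real_inner_smul_right, hcv, hc]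
    have hnorm : ‖(e t + v : F)‖ = √(t ^ 2 + ‖v‖ ^ 2) := by
      rw [norm_add_orthogonal, e.norm_map, norm_eq_abs, sq_abs]
    simp only [mem_ofPred_eq, mem_inter_iff, mem_preimage, mem_sphericalCone_top_iff,
      mem_ball_zero_iff, hinner, hnorm, planarSector, Prod.map, e.symm_apply_apply]
  rw [volume_eq_volume_prod_orthogonal (ℝ ∙ c), hmem, Measure.volume_eq_prod,
    ← e.symm.measurePreserving.map_eq, Measure.map_prod_map _ _ (by fun_prop) measurable_norm,
    Measure.map_apply (by fun_prop) (measurableSet_planarSector α)]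

theorem volume_real_sphericalCone_top_inter_ball (hF : 2 ≤ finrank ℝ F) {c : F} (hc : ‖c‖ = 1)
    {α : ℝ} (hα : α ∈ Icc 0 π) :
    volume.real (sphericalCone ⊤ c α ∩ ball 0 1) =
      (finrank ℝ F - 1) / finrank ℝ F * volume.real (ball (0 : (ℝ ∙ c)ᗮ) 1) *
        ∫ x in (0 : ℝ)..α, sin x ^ (finrank ℝ F - 2) := by
  have : Fact (finrank ℝ F = finrank ℝ F - 1 + 1) := ⟨by omega⟩
  have hrank : finrank ℝ (ℝ ∙ c)ᗮ = finrank ℝ F - 1 :=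
    Submodule.finrank_orthogonal_span_singleton (norm_pos_iff.1 (hc ▸ one_pos))
  have : Nontrivial (ℝ ∙ c)ᗮ := nontrivial_of_finrank_pos (R := ℝ) (by omega)
  have hnorm := isCone_univ.map_norm_restrict .univ (volume : Measure (ℝ ∙ c)ᗮ)
  have hint : 0 ≤ ∫ x in (0 : ℝ)..α, sin x ^ (finrank ℝ F - 2) :=
    intervalIntegral.integral_nonneg hα.1 fun x hx =>
      pow_nonneg (sin_nonneg_of_nonneg_of_le_pi hx.1 (hx.2.trans hα.2)) _
  rw [Measure.restrict_univ, univ_inter, hrank, Nat.sub_sub] at hnorm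
  rw [measureReal_def, volume_sphericalCone_top_inter_ball hc, hnorm, Measure.prod_smul_right,
    Measure.smul_apply, prod_radialMeasure_planarSector _ hα, smul_eq_mul, ENNReal.toReal_mul,
    ENNReal.toReal_mul, ENNReal.toReal_natCast, ENNReal.toReal_ofReal (by positivity),
    ← measureReal_def]
  push_cast [hF, one_le_two.trans hF]
  ring

end SphericalCone

section SphMu

variable {D : ℕ}

theorem sphMu_mono {A B : Set (EuclideanSpace ℝ (Fin D))} (h : A ⊆ B) : sphMu D A ≤ sphMu D B := by
  unfold sphMu sphericalMeasure
  exact measureReal_mono (preimage_mono h)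

theorem IsCone.sphMu_eq [NeZero D] {A : Set (EuclideanSpace ℝ (Fin D))} (hA : IsCone A)
    (hAm : MeasurableSet A) :
    sphMu D A =
      volume.real (A ∩ ball 0 1) / volume.real (ball (0 : EuclideanSpace ℝ (Fin D)) 1) := by
  have hD : (D : ℝ) ≠ 0 := Nat.cast_ne_zero.2 (NeZero.ne D)
  rw [sphMu, sphericalMeasure, Measure.smul_apply, smul_eq_mul, hA.toSphere_preimage_coe hAm,
    Measure.toSphere_apply_univ, ENNReal.toReal_mul, ENNReal.toReal_inv, ENNReal.toReal_mul,
    ENNReal.toReal_mul, finrank_euclideanSpace_fin, ENNReal.toReal_natCast, ← measureReal_def,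
    ← measureReal_def, ← div_eq_inv_mul, mul_div_mul_left _ _ hD]

theorem volume_real_ball_zero_one (F : Type*) [NormedAddCommGroup F] [InnerProductSpace ℝ F]
    [FiniteDimensional ℝ F] [MeasurableSpace F] [BorelSpace F] [Nontrivial F] :
    volume.real (ball (0 : F) 1) = √π ^ finrank ℝ F / Gamma (finrank ℝ F / 2 + 1) := by
  rw [measureReal_def, InnerProductSpace.volume_ball, ENNReal.ofReal_one, one_pow, one_mul,
    ENNReal.toReal_ofReal (by positivity)]

theorem sphMu_sphericalCone_top (hD : 2 ≤ D) {c : EuclideanSpace ℝ (Fin D)} (hc : ‖c‖ = 1) {α : ℝ}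
    (hα : α ∈ Icc 0 π) :
    sphMu D (sphericalCone ⊤ c α) =
      Gamma (D / 2) / (√π * Gamma ((D - 1) / 2)) * ∫ x in (0 : ℝ)..α, sin x ^ (D - 2) := by
  obtain ⟨k, rfl⟩ := Nat.exists_eq_add_of_le' hD
  have hn : finrank ℝ (EuclideanSpace ℝ (Fin (k + 2))) = k + 2 := finrank_euclideanSpace_fin
  have : Fact (finrank ℝ (EuclideanSpace ℝ (Fin (k + 2))) = k + 1 + 1) := ⟨hn⟩
  have hrank : finrank ℝ (ℝ ∙ c)ᗮ = k + 1 :=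
    Submodule.finrank_orthogonal_span_singleton (norm_pos_iff.1 (hc ▸ one_pos))
  have : Nontrivial (ℝ ∙ c)ᗮ := nontrivial_of_finrank_pos (R := ℝ) (by omega)
  have hk : ((k + 2 : ℕ) - 1 : ℝ) = (k + 1 : ℕ) := by push_cast; ring
  rw [(isCone_sphericalCone ⊤ c α).sphMu_eq (isClosed_sphericalCone ⊤ c α).measurableSet,
    volume_real_sphericalCone_top_inter_ball (hD.trans_eq hn.symm) hc hα, volume_real_ball_zero_one,
    volume_real_ball_zero_one, hrank, hn, hk, Gamma_add_one (by positivity),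
    Gamma_add_one (by positivity), Nat.add_sub_cancel]
  field_simp
  ring

theorem sphMu_conicThickening_sphericalCone_mul {U : Submodule ℝ (EuclideanSpace ℝ (Fin D))}
    (hU : 2 ≤ finrank ℝ U) {c : U} (hc : ‖c‖ = 1) (ε : ℝ) {α β : ℝ} (hα : α ∈ Icc 0 π)
    (hβ : β ∈ Icc 0 π) :
    sphMu D (conicThickening U (sphericalCone ⊤ c α) ε) *
        ∫ x in (0 : ℝ)..β, sin x ^ (finrank ℝ U - 2) =
      sphMu D (conicThickening U (sphericalCone ⊤ c β) ε) *
        ∫ x in (0 : ℝ)..α, sin x ^ (finrank ℝ U - 2) := by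
  have hD : 2 ≤ D := (hU.trans U.finrank_le).trans_eq finrank_euclideanSpace_fin
  have : NeZero D := ⟨by omega⟩
  have : Nontrivial U := nontrivial_of_finrank_pos (R := ℝ) (by omega)
  have hcone (γ : ℝ) := isCone_sphericalCone ⊤ c γ
  have hmeas (γ : ℝ) := (isClosed_sphericalCone ⊤ c γ).measurableSet
  have hvol {γ : ℝ} (hγ : γ ∈ Icc 0 π) := volume_real_sphericalCone_top_inter_ball hU hc hγ
  simp only [((hcone _).conicThickening ε).sphMu_eq (measurableSet_conicThickening (hmeas _) ε),
    measureReal_def, volume_conicThickening_inter_ball (hcone _) (hmeas _), ENNReal.toReal_mul]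
  simp only [← measureReal_def, hvol hα, hvol hβ]
  ring

end SphMu

theorem integral_zero_sin_pow_pos (m : ℕ) {α : ℝ} (hα : α ∈ Ioc 0 π) :
    0 < ∫ x in (0 : ℝ)..α, sin x ^ m :=
  intervalIntegral.intervalIntegral_pos_of_pos_on
    ((by fun_prop : Continuous _).intervalIntegrable _ _)
    (fun _ hx => pow_pos (sin_pos_of_pos_of_lt_pi hx.1 (hx.2.trans_le hα.2)) _) hα.1

theorem integral_zero_sin_pow_mono (m : ℕ) {α β : ℝ} (hα : 0 ≤ α) (hαβ : α ≤ β) (hβ : β ≤ π) :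
    ∫ x in (0 : ℝ)..α, sin x ^ m ≤ ∫ x in (0 : ℝ)..β, sin x ^ m :=
  intervalIntegral.integral_mono_interval le_rfl hα hαβ
    ((ae_restrict_mem measurableSet_Ioc).mono fun _ hx =>
      pow_nonneg (sin_nonneg_of_nonneg_of_le_pi hx.1.le (hx.2.trans hβ)) _)
    ((by fun_prop : Continuous _).intervalIntegrable _ _)

theorem stmt_10_general (D d : ℕ) (hd : 2 ≤ d) (C : ConvexCone ℝ (EuclideanSpace ℝ (Fin D)))
    (hCdim : finrank ℝ (Submodule.span ℝ (C : Set (EuclideanSpace ℝ (Fin D)))) = d)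
    (U : Submodule ℝ (EuclideanSpace ℝ (Fin D))) (hUdim : finrank ℝ U = d)
    (c : EuclideanSpace ℝ (Fin D)) (hcU : c ∈ U) (hc : ‖c‖ = 1) (ψ : ℝ) (hψ : ψ ∈ Ioc 0 π)
    (hsup : sphericalCone U c ψ ⊆ (C : Set (EuclideanSpace ℝ (Fin D))))
    (ε : ℝ) (hε : ε ∈ Ioc (0 : ℝ) 1) :
    Gamma (D / 2) / (√π * Gamma ((D - 1) / 2)) *
        ((∫ x in (0 : ℝ)..ψ, sin x ^ (d - 2)) / ∫ x in (0 : ℝ)..arcsin ε, sin x ^ (d - 2)) *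
        ∫ x in (0 : ℝ)..arcsin ε, sin x ^ (D - 2) ≤
      sphMu D (approxCone C ε) := by
  have hD : 2 ≤ D :=
    (hd.trans (hUdim.ge.trans U.finrank_le)).trans_eq finrank_euclideanSpace_fin
  have hspan : U = Submodule.span ℝ (C : Set (EuclideanSpace ℝ (Fin D))) :=
    Submodule.eq_of_le_of_finrank_eq (le_span_of_sphericalCone_subset hcU hc hψ hsup)
      (hUdim.trans hCdim.symm)
  lift c to U using hcU
  subst hUdim
  set θ := arcsin ε
  have hθ0 : 0 < θ := arcsin_pos.2 hε.1
  have hθ1 : θ ≤ π / 2 := arcsin_le_pi_div_two ε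
  have hθ : θ ∈ Ioc 0 π := ⟨hθ0, by linarith⟩
  have hsin : sin θ = ε := sin_arcsin (by linarith [hε.1]) hε.2
  have hIψ := integral_zero_sin_pow_pos (finrank ℝ U - 2) hψ
  have hIθ := integral_zero_sin_pow_pos (finrank ℝ U - 2) hθ
  have hcap : sphericalCone ⊤ (c : EuclideanSpace ℝ (Fin D)) θ ⊆
      conicThickening U (sphericalCone ⊤ c θ) ε :=
    hsin ▸ sphericalCone_top_subset_conicThickening hc ⟨hθ0.le, hθ1⟩
  set I : ℝ → ℝ := fun α => ∫ x in (0 : ℝ)..α, sin x ^ (finrank ℝ U - 2)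
  calc _ = I ψ / I θ * sphMu D (sphericalCone ⊤ (c : EuclideanSpace ℝ (Fin D)) θ) := by
        rw [sphMu_sphericalCone_top hD hc (Ioc_subset_Icc_self hθ)]
        ring
    _ ≤ I ψ / I θ * sphMu D (conicThickening U (sphericalCone ⊤ c θ) ε) :=
        mul_le_mul_of_nonneg_left (sphMu_mono hcap) (div_pos hIψ hIθ).le
    _ = sphMu D (conicThickening U (sphericalCone ⊤ c ψ) ε) := by
        rw [div_mul_eq_mul_div, mul_comm, div_eq_iff hIθ.ne',
          sphMu_conicThickening_sphericalCone_mul hd hc ε (Ioc_subset_Icc_self hθ)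
            (Ioc_subset_Icc_self hψ)]
    _ ≤ sphMu D (approxCone C ε) :=
        sphMu_mono (conicThickening_subset_approxCone hspan
          (fun u hu => hsup ⟨u.2, mem_sphericalCone_top_iff.1 hu⟩) ε)

/-- **Packing lower bound on `μ(C^ε)` (Proposition 2).** Let `2 ≤ d ≤ D`, `D ≥ 3`, and let
`C ⊆ ℝ^D` be a `d`-dimensional convex cone containing a `d`-dimensional spherical cone
`P^d[c,ψ]` for a unit vector `c` and `ψ ∈ (0,π/2)`. Let `ε ∈ (0,1)`, `θ := arcsin ε`, and
assume `2θ ≤ ψ`. Then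
`μ(C^ε) ≥ (Γ(D/2)/(√π·Γ((D−1)/2))) · (∫₀^ψ sin^{d−2} / ∫₀^{2θ} sin^{d−2}) · ∫₀^θ sin^{D−2}`. -/
theorem stmt_10 (D d : ℕ) (hd : 2 ≤ d) (hdD : d ≤ D) (hD : 3 ≤ D)
    (C : ConvexCone ℝ (EuclideanSpace ℝ (Fin D)))
    (hCdim : Module.finrank ℝ
      (Submodule.span ℝ (C : Set (EuclideanSpace ℝ (Fin D)))) = d)
    (U : Submodule ℝ (EuclideanSpace ℝ (Fin D))) (hUdim : Module.finrank ℝ U = d)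
    (c : EuclideanSpace ℝ (Fin D)) (hcU : c ∈ U) (hc : ‖c‖ = 1)
    (ψ : ℝ) (hψ : ψ ∈ Set.Ioo 0 (Real.pi / 2))
    (hsup : sphericalCone U c ψ ⊆ (C : Set (EuclideanSpace ℝ (Fin D))))
    (ε : ℝ) (hε : ε ∈ Set.Ioo (0 : ℝ) 1)
    (h2θ : 2 * Real.arcsin ε ≤ ψ) :
    Real.Gamma ((D : ℝ) / 2) / (Real.sqrt Real.pi * Real.Gamma (((D : ℝ) - 1) / 2)) *
        ((∫ x in (0 : ℝ)..ψ, Real.sin x ^ (d - 2)) /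
          (∫ x in (0 : ℝ)..(2 * Real.arcsin ε), Real.sin x ^ (d - 2))) *
        (∫ x in (0 : ℝ)..(Real.arcsin ε), Real.sin x ^ (D - 2)) ≤
      sphMu D (approxCone C ε) := by
  have hψπ : ψ ∈ Ioc 0 π := ⟨hψ.1, by linarith [hψ.2, pi_pos]⟩
  have hθ : arcsin ε ∈ Ioc 0 π := ⟨arcsin_pos.2 hε.1, by linarith [hψπ.2, arcsin_pos.2 hε.1]⟩
  have hIψ := integral_zero_sin_pow_pos (d - 2) hψπ
  have hIθ := integral_zero_sin_pow_pos (d - 2) hθ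
  have hJθ := integral_zero_sin_pow_pos (D - 2) hθ
  have hI : ∫ x in (0 : ℝ)..arcsin ε, sin x ^ (d - 2) ≤
      ∫ x in (0 : ℝ)..(2 * arcsin ε), sin x ^ (d - 2) :=
    integral_zero_sin_pow_mono _ hθ.1.le (by linarith [hθ.1]) (h2θ.trans hψπ.2)
  have hD1 : (0 : ℝ) < D - 1 := sub_pos.2 (by exact_mod_cast (by omega : 1 < D))
  refine le_trans ?_ (stmt_10_general D d hd C hCdim U hUdim c hcU hc ψ hψπ hsup ε
    (Ioo_subset_Ioc_self hε))
  gcongr
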